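/- Application: let (X,d,μ) be a separable metric measure space with μ(X) < ∞ satisfying the growth condition μ(B_r) ≤ A r^n, and suppose Λ_β is dense in L²(μ) for some 0 < β < min(n,γ). Let K be a standard singular integral kernel such that K*(x,y) = conj(K(y,x)) also satisfies the smoothness condition (S2). If the smooth truncations satisfy ‖T_ε 1‖_{Λ_β} ≤ C' and ‖T*_ε 1‖_{Λ_β} ≤ C'' for all ε > 0, then there is a constant C such that ‖T_ε f‖_{L²(μ)} ≤ C‖f‖_{L²(μ)} for all f ∈ Λ_β and all ε > 0; hence each T_ε extends to a bounded operator on L²(μ) with norm uniformly bounded in ε. -/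

import Mathlib

open MeasureTheory Metric

/-!
Each truncation `T_ε` and its adjoint act boundedly on `Λ_β`, uniformly in `ε`: to compare
`T_ε f(x₁)` with `T_ε f(x₂)`, split the integral at distance `2d(x₁, x₂)`, use the size of the
kernel nearby, its smoothness far away, and `T_ε 1 ∈ Λ_β` for the constants `f(x₁)`, `f(x₂)`.
Krein's symmetrization then transfers this to `L²`: if `S = T* T` and `f ∈ Λ_β`, then `‖Sᵐ f‖`
is log-convex in `m` and at most `c (ab)ᵐ`, where `a`, `b` bound `T`, `T*` on `Λ_β`; hence
`‖S f‖ ≤ ab ‖f‖` on a dense subspace, and `‖T‖² = ‖S‖ ≤ ab`.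
-/

namespace SingularIntegral

open Filter Function Set
open scoped NNReal ENNReal Topology ComplexConjugate

section Growth

variable {X : Type*} [PseudoMetricSpace X] [MeasurableSpace X]

/-- The `n`-dimensional growth condition `μ(B(x, r)) ≤ A rⁿ`. -/
def HasGrowth (μ : Measure X) (n A : ℝ) : Prop :=
  ∀ (x : X) (r : ℝ), 0 < r → μ (ball x r) ≤ ENNReal.ofReal (A * r ^ n)

variable [OpensMeasurableSpace X] {μ : Measure X} {n A : ℝ}

lemma HasGrowth.setLIntegral_le_tsum (hμ : HasGrowth μ n A) (x : X) {S : Set X}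
    (hS : MeasurableSet S) {F : X → ℝ≥0∞} {c : ℕ → ℝ≥0∞} {R : ℕ → ℝ} (hR : ∀ k, 0 < R k)
    (hF : ∀ y ∈ S, ∃ k, dist x y < R k ∧ F y ≤ c k) :
    ∫⁻ y in S, F y ∂μ ≤ ∑' k, c k * ENNReal.ofReal (A * R k ^ n) := by
  calc ∫⁻ y in S, F y ∂μ
      ≤ ∫⁻ y in S, ∑' k, (ball x (R k)).indicator (fun _ ↦ c k) y ∂μ := by
        refine setLIntegral_mono' hS fun y hy ↦ ?_
        obtain ⟨k, hyk, hFk⟩ := hF y hy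
        refine hFk.trans (le_trans ?_ (ENNReal.le_tsum k))
        rw [indicator_of_mem (mem_ball'.2 hyk)]
    _ ≤ ∫⁻ y, ∑' k, (ball x (R k)).indicator (fun _ ↦ c k) y ∂μ := setLIntegral_le_lintegral _ _
    _ = ∑' k, ∫⁻ y, (ball x (R k)).indicator (fun _ ↦ c k) y ∂μ :=
        lintegral_tsum fun k ↦ (measurable_const.indicator measurableSet_ball).aemeasurable
    _ ≤ ∑' k, c k * ENNReal.ofReal (A * R k ^ n) := by
        refine ENNReal.tsum_le_tsum fun k ↦ ?_
        rw [lintegral_indicator_const measurableSet_ball]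
        gcongr
        exact hμ x _ (hR k)

lemma tsum_ofReal_mul_geometric {D q : ℝ} (hD : 0 ≤ D) (hq : 0 ≤ q) (hq1 : q < 1) :
    ∑' k : ℕ, ENNReal.ofReal (D * q ^ k) = ENNReal.ofReal (D * (1 - q)⁻¹) := by
  rw [← ENNReal.ofReal_tsum_of_nonneg (fun k ↦ by positivity)
    ((summable_geometric_of_lt_one hq hq1).mul_left D), tsum_mul_left,
    tsum_geometric_of_lt_one hq hq1]

lemma rpow_div_rpow_le_of_mem_Icc {a b d u : ℝ} (ha : 0 ≤ a) (hb : 0 ≤ b) (hu : 0 < u)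
    (hd : d ∈ Icc (u / 2) (2 * u)) : d ^ a / d ^ b ≤ 2 ^ (a + b) * u ^ (a - b) := by
  have hd0 : 0 ≤ d := (half_pos hu).le.trans hd.1
  calc d ^ a / d ^ b ≤ (2 * u) ^ a / (u / 2) ^ b := by
        gcongr
        exacts [hd.2, hd.1]
    _ = 2 ^ (a + b) * u ^ (a - b) := by
        rw [Real.mul_rpow two_pos.le hu.le, Real.div_rpow hu.le two_pos.le,
          Real.rpow_add two_pos, Real.rpow_sub hu]
        field_simp

/-- The set `S` is covered by the annuli of radii comparable to `ρᵏ r`, whose contributions form a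
geometric series. -/
lemma HasGrowth.setLIntegral_rpow_div_rpow_le (hμ : HasGrowth μ n A) (hA : 0 ≤ A) {a b ρ r : ℝ}
    (ha : 0 < a) (hb : 0 ≤ b) (hρ : 0 < ρ) (hρ1 : ρ ^ (a - b + n) < 1) (hr : 0 < r) {x : X}
    {S : Set X} (hS : MeasurableSet S)
    (hcover : ∀ y ∈ S, 0 < dist x y →
      ∃ k : ℕ, ρ ^ k * r / 2 ≤ dist x y ∧ dist x y < 2 * (ρ ^ k * r)) :
    ∫⁻ y in S, ENNReal.ofReal (dist x y ^ a / dist x y ^ b) ∂μ ≤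
      ENNReal.ofReal (A * 2 ^ (a + b + n) * (1 - ρ ^ (a - b + n))⁻¹ * r ^ (a - b + n)) := by
  set c : ℕ → ℝ≥0∞ := fun k ↦ ENNReal.ofReal (2 ^ (a + b) * (ρ ^ k * r) ^ (a - b))
  have hscale : ∀ k : ℕ, (ρ ^ k * r) ^ (a - b + n) = r ^ (a - b + n) * (ρ ^ (a - b + n)) ^ k :=
    fun k ↦ by rw [Real.mul_rpow (by positivity) hr.le, ← Real.rpow_pow_comm hρ.le, mul_comm]
  have hterm : ∀ k, c k * ENNReal.ofReal (A * (2 * (ρ ^ k * r)) ^ n) =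
      ENNReal.ofReal (A * 2 ^ (a + b + n) * r ^ (a - b + n) * (ρ ^ (a - b + n)) ^ k) := fun k ↦ by
    have hu : 0 < ρ ^ k * r := by positivity
    rw [← ENNReal.ofReal_mul (by positivity), mul_assoc _ (r ^ (a - b + n)), ← hscale,
      Real.rpow_add hu, Real.rpow_add two_pos (a + b) n, Real.mul_rpow two_pos.le hu.le]
    ring_nf
  calc ∫⁻ y in S, ENNReal.ofReal (dist x y ^ a / dist x y ^ b) ∂μ
      ≤ ∑' k, c k * ENNReal.ofReal (A * (2 * (ρ ^ k * r)) ^ n) := by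
        refine hμ.setLIntegral_le_tsum x hS (fun k ↦ by positivity) fun y hy ↦ ?_
        rcases dist_nonneg.eq_or_lt' (a := dist x y) with hxy | hxy
        · refine ⟨0, by rw [hxy]; positivity, ?_⟩
          simp only [hxy, Real.zero_rpow ha.ne', zero_div, ENNReal.ofReal_zero, zero_le]
        · obtain ⟨k, hlow, hhigh⟩ := hcover y hy hxy
          exact ⟨k, hhigh, ENNReal.ofReal_le_ofReal <|
            rpow_div_rpow_le_of_mem_Icc ha.le hb (by positivity) ⟨hlow, hhigh.le⟩⟩
    _ = _ := by
        simp_rw [hterm]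
        rw [tsum_ofReal_mul_geometric (by positivity) (by positivity) hρ1]
        ring_nf

lemma HasGrowth.exists_setLIntegral_ball_le (hμ : HasGrowth μ n A) (hA : 0 ≤ A) (hn : 0 ≤ n)
    {β : ℝ} (hβ : 0 < β) :
    ∃ c : ℝ≥0, ∀ (x : X) (r : ℝ), 0 < r →
      ∫⁻ y in ball x r, ENNReal.ofReal (dist x y ^ β / dist x y ^ n) ∂μ ≤
        ENNReal.ofReal (c * r ^ β) := by
  have hρ : (1 / 2 : ℝ) ^ β < 1 := Real.rpow_lt_one (by norm_num) (by norm_num) hβ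
  refine ⟨⟨A * 2 ^ (β + n + n) * (1 - (1 / 2) ^ β)⁻¹,
    mul_nonneg (by positivity) (inv_nonneg.2 (sub_nonneg.2 hρ.le))⟩, fun x r hr ↦ ?_⟩
  have hcover : ∀ y ∈ ball x r, 0 < dist x y →
      ∃ k : ℕ, (1 / 2) ^ k * r / 2 ≤ dist x y ∧ dist x y < 2 * ((1 / 2) ^ k * r) := by
    intro y hy hxy
    obtain ⟨k, hlow, hhigh⟩ := exists_nat_pow_near_of_lt_one (div_pos hxy hr)
      ((div_le_one hr).2 (mem_ball'.1 hy).le) (one_half_pos (α := ℝ)) one_half_lt_one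
    rw [lt_div_iff₀ hr, pow_succ] at hlow
    rw [div_le_iff₀ hr] at hhigh
    have : 0 < (1 / 2 : ℝ) ^ k * r := by positivity
    exact ⟨k, by linarith, by linarith⟩
  have hbound := hμ.setLIntegral_rpow_div_rpow_le hA hβ hn one_half_pos
    (by rwa [sub_add_cancel]) hr measurableSet_ball hcover
  simp only [sub_add_cancel] at hbound
  exact hbound

lemma HasGrowth.exists_setLIntegral_compl_ball_le (hμ : HasGrowth μ n A) (hA : 0 ≤ A) (hn : 0 ≤ n)
    {β γ : ℝ} (hβ : 0 < β) (hβγ : β < γ) :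
    ∃ c : ℝ≥0, ∀ (x : X) (r : ℝ), 0 < r →
      ∫⁻ y in (ball x r)ᶜ, ENNReal.ofReal (dist x y ^ β / dist x y ^ (n + γ)) ∂μ ≤
        ENNReal.ofReal (c * r ^ (β - γ)) := by
  have hexp : β - (n + γ) + n = β - γ := by ring
  have hρ : (2 : ℝ) ^ (β - γ) < 1 :=
    Real.rpow_lt_one_of_one_lt_of_neg one_lt_two (sub_neg.2 hβγ)
  refine ⟨⟨A * 2 ^ (β + (n + γ) + n) * (1 - 2 ^ (β - γ))⁻¹,
    mul_nonneg (by positivity) (inv_nonneg.2 (sub_nonneg.2 hρ.le))⟩, fun x r hr ↦ ?_⟩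
  have hcover : ∀ y ∈ (ball x r)ᶜ, 0 < dist x y →
      ∃ k : ℕ, 2 ^ k * r / 2 ≤ dist x y ∧ dist x y < 2 * (2 ^ k * r) := by
    intro y hy hxy
    rw [mem_compl_iff, mem_ball', not_lt] at hy
    obtain ⟨k, hlow, hhigh⟩ := exists_nat_pow_near ((one_le_div hr).2 hy) (one_lt_two (α := ℝ))
    rw [le_div_iff₀ hr] at hlow
    rw [div_lt_iff₀ hr, pow_succ] at hhigh
    exact ⟨k, by linarith, by linarith⟩
  have hbound := hμ.setLIntegral_rpow_div_rpow_le hA hβ (b := n + γ) (by linarith) two_pos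
    (by rwa [hexp]) hr measurableSet_ball.compl hcover
  simp only [hexp] at hbound
  exact hbound

end Growth

section Holder

variable {X E : Type*} [PseudoMetricSpace X] [SeminormedAddCommGroup E] {β M : ℝ} {f : X → E}

/-- The bound `‖f‖_{Λ_β} ≤ M`, where the norm of `Λ_β` is the maximum of the supremum norm and of
the `β`-Hölder seminorm. -/
structure HolderBound (β M : ℝ) (f : X → E) : Prop where
  norm_le (x : X) : ‖f x‖ ≤ M
  norm_sub_le (x y : X) : ‖f x - f y‖ ≤ M * dist x y ^ β

lemma exists_holderBound {L : ℝ} (hM : ∀ x, ‖f x‖ ≤ M)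
    (hL : ∀ x y, ‖f x - f y‖ ≤ L * dist x y ^ β) : ∃ M', HolderBound β M' f :=
  ⟨max M L, fun x ↦ (hM x).trans (le_max_left _ _), fun x y ↦ (hL x y).trans <| by
    gcongr; exact le_max_right _ _⟩

namespace HolderBound

lemma mono {M' : ℝ} (hf : HolderBound β M f) (hM : M ≤ M') : HolderBound β M' f :=
  ⟨fun x ↦ (hf.norm_le x).trans hM, fun x y ↦ (hf.norm_sub_le x y).trans <| by gcongr⟩

lemma nonneg (hf : HolderBound β M f) (x : X) : 0 ≤ M := (norm_nonneg _).trans (hf.norm_le x)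

lemma continuous (hf : HolderBound β M f) (hβ : 0 < β) : Continuous f := by
  refine continuous_iff_continuousAt.2 fun x ↦ tendsto_iff_norm_sub_tendsto_zero.2 ?_
  have hlim : Tendsto (fun y ↦ M * dist y x ^ β) (𝓝 x) (𝓝 0) := by
    have hcont : Continuous fun y ↦ M * dist y x ^ β :=
      continuous_const.mul <| (continuous_id.dist continuous_const).rpow_const fun _ ↦ .inr hβ.le
    simpa only [id, dist_self, Real.zero_rpow hβ.ne', mul_zero] using hcont.tendsto x
  exact squeeze_zero (fun _ ↦ norm_nonneg _) (fun y ↦ hf.norm_sub_le y x) hlim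

end HolderBound

end Holder

section Kernel

variable {X 𝕜 : Type*} [RCLike 𝕜]

/-- The adjoint kernel `K*(x, y) = conj (K(y, x))`. -/
def adjointKernel (K : X → X → 𝕜) (x y : X) : 𝕜 := conj (K y x)

lemma norm_adjointKernel_le {k : X → X → 𝕜} {B : ℝ} (hB : ∀ x y, ‖k x y‖ ≤ B) (x y : X) :
    ‖adjointKernel k x y‖ ≤ B :=
  (RCLike.norm_conj _).trans_le (hB y x)

lemma stronglyMeasurable_adjointKernel [MeasurableSpace X] {k : X → X → 𝕜}
    (hk : StronglyMeasurable (uncurry k)) : StronglyMeasurable (uncurry (adjointKernel k)) :=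
  RCLike.continuous_conj.comp_stronglyMeasurable (hk.comp_measurable measurable_swap)

/-- The integral operator with kernel `k`, at the level of functions. -/
noncomputable def integralOp [MeasurableSpace X] (μ : Measure X) (k : X → X → 𝕜) (f : X → 𝕜)
    (x : X) : 𝕜 :=
  ∫ y, k x y * f y ∂μ

variable [MetricSpace X] {n γ C C' : ℝ} {K : X → X → 𝕜}

/-- The size condition (S1) on a singular integral kernel. -/
def HasSizeBound (n C : ℝ) (K : X → X → 𝕜) : Prop :=
  ∀ x y, x ≠ y → ‖K x y‖ ≤ C / dist x y ^ n

/-- The smoothness condition (S2) on a singular integral kernel, in its first variable. -/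
def HasSmoothnessBound (n γ C : ℝ) (K : X → X → 𝕜) : Prop :=
  ∀ x₁ x₂ y, x₁ ≠ y → 2 * dist x₁ x₂ ≤ dist x₁ y →
    ‖K x₁ y - K x₂ y‖ ≤ C * dist x₁ x₂ ^ γ / dist x₁ y ^ (n + γ)

lemma HasSizeBound.mono (hK : HasSizeBound n C K) (hC : C ≤ C') : HasSizeBound n C' K :=
  fun x y hxy ↦ (hK x y hxy).trans <| by gcongr

protected lemma HasSizeBound.adjointKernel (hK : HasSizeBound n C K) :
    HasSizeBound n C (adjointKernel K) := fun x y hxy ↦ by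
  rw [adjointKernel, RCLike.norm_conj, dist_comm]
  exact hK y x hxy.symm

lemma HasSmoothnessBound.mono (hK : HasSmoothnessBound n γ C K) (hC : C ≤ C') :
    HasSmoothnessBound n γ C' K :=
  fun x₁ x₂ y hy hxy ↦ (hK x₁ x₂ y hy hxy).trans <| by gcongr

end Kernel

lemma norm_setIntegral_le_of_setLIntegral_le {α E : Type*} [MeasurableSpace α] {μ : Measure α}
    [NormedAddCommGroup E] [NormedSpace ℝ E] {S : Set α} (hS : MeasurableSet S) {g : α → E}
    {h : α → ℝ} {c B : ℝ} (hc : 0 ≤ c) (hB : 0 ≤ B) (hg : ∀ y ∈ S, ‖g y‖ ≤ c * h y)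
    (hh : ∫⁻ y in S, ENNReal.ofReal (h y) ∂μ ≤ ENNReal.ofReal B) :
    ‖∫ y in S, g y ∂μ‖ ≤ c * B := by
  rw [← ENNReal.ofReal_le_ofReal_iff (by positivity), ofReal_norm]
  calc ‖∫ y in S, g y ∂μ‖ₑ ≤ ∫⁻ y in S, ‖g y‖ₑ ∂μ := enorm_integral_le_lintegral_enorm _
    _ ≤ ∫⁻ y in S, ENNReal.ofReal c * ENNReal.ofReal (h y) ∂μ := by
        refine setLIntegral_mono' hS fun y hy ↦ ?_
        rw [← ENNReal.ofReal_mul hc, ← ofReal_norm]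
        exact ENNReal.ofReal_le_ofReal (hg y hy)
    _ = ENNReal.ofReal c * ∫⁻ y in S, ENNReal.ofReal (h y) ∂μ :=
        lintegral_const_mul' _ _ ENNReal.ofReal_ne_top
    _ ≤ ENNReal.ofReal c * ENNReal.ofReal B := by gcongr
    _ = ENNReal.ofReal (c * B) := (ENNReal.ofReal_mul hc).symm

section Integral

variable {α 𝕜 : Type*} [MeasurableSpace α] [RCLike 𝕜] {μ : Measure α} {g g₁ g₂ f : α → 𝕜}

lemma setIntegral_mul_sub_const (hg : Integrable g μ) (hgf : Integrable (fun y ↦ g y * f y) μ)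
    (a : 𝕜) (S : Set α) :
    ∫ y in S, g y * (f y - a) ∂μ = ∫ y in S, g y * f y ∂μ - a * ∫ y in S, g y ∂μ := by
  rw [← integral_const_mul, ← integral_sub hgf.integrableOn (hg.const_mul a).integrableOn]
  simp_rw [mul_sub, mul_comm a]

lemma integral_mul_eq_add_setIntegral_mul_sub (hg : Integrable g μ)
    (hgf : Integrable (fun y ↦ g y * f y) μ) (a : 𝕜) {B : Set α} (hB : MeasurableSet B) :
    ∫ y, g y * f y ∂μ = ∫ y in B, g y * (f y - a) ∂μ + ∫ y in Bᶜ, g y * (f y - a) ∂μ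
      + a * ∫ y, g y ∂μ := by
  rw [setIntegral_mul_sub_const hg hgf, setIntegral_mul_sub_const hg hgf,
    ← integral_add_compl hB hgf, ← integral_add_compl hB hg]
  ring

lemma integral_mul_sub_integral_mul_eq (hg₁ : Integrable g₁ μ) (hg₂ : Integrable g₂ μ)
    (hgf₁ : Integrable (fun y ↦ g₁ y * f y) μ) (hgf₂ : Integrable (fun y ↦ g₂ y * f y) μ)
    (a₁ a₂ : 𝕜) {B : Set α} (hB : MeasurableSet B) :
    ∫ y, g₁ y * f y ∂μ - ∫ y, g₂ y * f y ∂μ =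
      ∫ y in B, g₁ y * (f y - a₁) ∂μ - ∫ y in B, g₂ y * (f y - a₂) ∂μ
        - (a₂ - a₁) * ∫ y in B, g₂ y ∂μ + ∫ y in Bᶜ, (g₁ y - g₂ y) * (f y - a₁) ∂μ
        + a₁ * (∫ y, g₁ y ∂μ - ∫ y, g₂ y ∂μ) := by
  have hfar : ∫ y in Bᶜ, (g₁ y - g₂ y) * (f y - a₁) ∂μ =
      ∫ y in Bᶜ, g₁ y * (f y - a₁) ∂μ - ∫ y in Bᶜ, g₂ y * (f y - a₁) ∂μ := by
    simp_rw [sub_mul]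
    refine integral_sub (Integrable.integrableOn ?_) (Integrable.integrableOn ?_)
    · simp_rw [mul_sub]
      exact hgf₁.sub (hg₁.mul_const a₁)
    · simp_rw [mul_sub]
      exact hgf₂.sub (hg₂.mul_const a₁)
  rw [hfar, integral_mul_eq_add_setIntegral_mul_sub hg₁ hgf₁ a₁ hB,
    integral_mul_eq_add_setIntegral_mul_sub hg₂ hgf₂ a₁ hB,
    setIntegral_mul_sub_const hg₂ hgf₂ a₁ B, setIntegral_mul_sub_const hg₂ hgf₂ a₂ B]
  ring

end Integral

section HolderT1

variable {X 𝕜 : Type*} [RCLike 𝕜] [MetricSpace X] [MeasurableSpace X] [OpensMeasurableSpace X]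
  {μ : Measure X} {n A β γ : ℝ}

lemma HasGrowth.exists_norm_setIntegral_mul_sub_le (hμ : HasGrowth μ n A) (hA : 0 ≤ A)
    (hn : 0 ≤ n) (hβ : 0 < β) :
    ∃ c : ℝ≥0, ∀ (k : X → X → 𝕜) (C : ℝ≥0), HasSizeBound n C k →
      ∀ (f : X → 𝕜) (M : ℝ), HolderBound β M f →
      ∀ (x : X) (r : ℝ) (S : Set X), 0 < r → MeasurableSet S → S ⊆ ball x r →
        ‖∫ y in S, k x y * (f y - f x) ∂μ‖ ≤ c * C * M * r ^ β := by
  obtain ⟨c, hc⟩ := hμ.exists_setLIntegral_ball_le hA hn hβ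
  refine ⟨c, fun k C hk f M hf x r S hr hS hSr ↦ ?_⟩
  have hM : 0 ≤ M := hf.nonneg x
  have hbound : ∀ y ∈ S, ‖k x y * (f y - f x)‖ ≤ C * M * (dist x y ^ β / dist x y ^ n) := by
    intro y _
    rcases eq_or_ne x y with rfl | hxy
    · rw [sub_self, mul_zero, norm_zero]
      positivity
    calc ‖k x y * (f y - f x)‖ ≤ C / dist x y ^ n * (M * dist x y ^ β) := by
          rw [norm_mul, dist_comm x y]
          gcongr
          exacts [dist_comm x y ▸ hk x y hxy, hf.norm_sub_le y x]
      _ = C * M * (dist x y ^ β / dist x y ^ n) := by ring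
  calc ‖∫ y in S, k x y * (f y - f x) ∂μ‖ ≤ C * M * (c * r ^ β) :=
        norm_setIntegral_le_of_setLIntegral_le hS (by positivity) (by positivity) hbound
          ((lintegral_mono_set hSr).trans (hc x r hr))
    _ = c * C * M * r ^ β := by ring

lemma HasGrowth.exists_norm_setIntegral_compl_sub_mul_sub_le (hμ : HasGrowth μ n A) (hA : 0 ≤ A)
    (hn : 0 ≤ n) (hβ : 0 < β) (hβγ : β < γ) :
    ∃ c : ℝ≥0, ∀ (k : X → X → 𝕜) (C : ℝ≥0), HasSmoothnessBound n γ C k →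
      ∀ (f : X → 𝕜) (M : ℝ), HolderBound β M f → ∀ x₁ x₂ : X, x₁ ≠ x₂ →
        ‖∫ y in (ball x₁ (2 * dist x₁ x₂))ᶜ, (k x₁ y - k x₂ y) * (f y - f x₁) ∂μ‖ ≤
          c * C * M * dist x₁ x₂ ^ β := by
  obtain ⟨c, hc⟩ := hμ.exists_setLIntegral_compl_ball_le hA hn hβ hβγ
  refine ⟨c * 2 ^ (β - γ), fun k C hk f M hf x₁ x₂ hne ↦ ?_⟩
  have hM : 0 ≤ M := hf.nonneg x₁
  have hδ : 0 < dist x₁ x₂ := dist_pos.2 hne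
  have hbound : ∀ y ∈ (ball x₁ (2 * dist x₁ x₂))ᶜ, ‖(k x₁ y - k x₂ y) * (f y - f x₁)‖ ≤
      C * dist x₁ x₂ ^ γ * M * (dist x₁ y ^ β / dist x₁ y ^ (n + γ)) := by
    intro y hy
    rw [mem_compl_iff, mem_ball', not_lt] at hy
    calc ‖(k x₁ y - k x₂ y) * (f y - f x₁)‖
        ≤ C * dist x₁ x₂ ^ γ / dist x₁ y ^ (n + γ) * (M * dist x₁ y ^ β) := by
          rw [norm_mul]
          gcongr
          · exact hk x₁ x₂ y (dist_pos.1 (by linarith)) hy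
          · exact dist_comm y x₁ ▸ hf.norm_sub_le y x₁
      _ = C * dist x₁ x₂ ^ γ * M * (dist x₁ y ^ β / dist x₁ y ^ (n + γ)) := by ring
  calc ‖∫ y in (ball x₁ (2 * dist x₁ x₂))ᶜ, (k x₁ y - k x₂ y) * (f y - f x₁) ∂μ‖
      ≤ C * dist x₁ x₂ ^ γ * M * (c * (2 * dist x₁ x₂) ^ (β - γ)) :=
        norm_setIntegral_le_of_setLIntegral_le measurableSet_ball.compl (by positivity)
          (by positivity) hbound (hc x₁ _ (by positivity))
    _ = ↑(c * 2 ^ (β - γ)) * C * M * dist x₁ x₂ ^ β := by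
        rw [Real.mul_rpow two_pos.le hδ.le, Real.rpow_sub hδ, NNReal.coe_mul, NNReal.coe_rpow,
          NNReal.coe_ofNat]
        field_simp

lemma HolderBound.integrable_mul {g f : X → 𝕜} {M : ℝ} (hf : HolderBound β M f) (hβ : 0 < β)
    (hg : Integrable g μ) : Integrable (fun y ↦ g y * f y) μ :=
  hg.mul_bdd (hf.continuous hβ).aestronglyMeasurable (.of_forall hf.norm_le)

lemma norm_integralOp_le [IsFiniteMeasure μ] (hn : 0 ≤ n) (hβ : 0 < β) {k : X → X → 𝕜} {C : ℝ≥0}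
    (hk : HasSizeBound n C k) {x : X} (hkx : Integrable (k x) μ) {f : X → 𝕜} {M : ℝ}
    (hf : HolderBound β M f) :
    ‖integralOp μ k f x‖ ≤ ‖∫ y in ball x 1, k x y * (f y - f x) ∂μ‖
      + 2 * C * M * μ.real univ + M * ‖∫ y, k x y ∂μ‖ := by
  have hM : 0 ≤ M := hf.nonneg x
  have hfar : ‖∫ y in (ball x 1)ᶜ, k x y * (f y - f x) ∂μ‖ ≤ 2 * C * M * μ.real univ := by
    refine (norm_setIntegral_le_of_norm_le_const (C := 2 * C * M) (measure_lt_top _ _)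
      fun y hy ↦ ?_).trans (by gcongr; exacts [measure_ne_top _ _, subset_univ _])
    rw [mem_compl_iff, mem_ball', not_lt] at hy
    calc ‖k x y * (f y - f x)‖ ≤ C * (M + M) := by
          rw [norm_mul]
          gcongr
          · exact (hk x y (dist_pos.1 (by linarith))).trans
              (div_le_self C.2 (Real.one_le_rpow hy hn))
          · exact (norm_sub_le _ _).trans (add_le_add (hf.norm_le y) (hf.norm_le x))
      _ = 2 * C * M := by ring
  rw [integralOp, integral_mul_eq_add_setIntegral_mul_sub hkx (hf.integrable_mul hβ hkx) (f x)
    (measurableSet_ball (x := x) (ε := 1))]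
  refine norm_add₃_le.trans ?_
  rw [norm_mul]
  gcongr
  exact hf.norm_le x

lemma norm_integralOp_sub_le (hβ : 0 < β) {k : X → X → 𝕜} (hk : ∀ x, Integrable (k x) μ)
    {f : X → 𝕜} {M : ℝ} (hf : HolderBound β M f) (x₁ x₂ : X) {B : Set X} (hB : MeasurableSet B) :
    ‖integralOp μ k f x₁ - integralOp μ k f x₂‖ ≤
      ‖∫ y in B, k x₁ y * (f y - f x₁) ∂μ‖ + ‖∫ y in B, k x₂ y * (f y - f x₂) ∂μ‖
        + M * dist x₁ x₂ ^ β * ‖∫ y in B, k x₂ y ∂μ‖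
        + ‖∫ y in Bᶜ, (k x₁ y - k x₂ y) * (f y - f x₁) ∂μ‖
        + M * ‖∫ y, k x₁ y ∂μ - ∫ y, k x₂ y ∂μ‖ := by
  rw [integralOp, integralOp, integral_mul_sub_integral_mul_eq (hk x₁) (hk x₂)
    (hf.integrable_mul hβ (hk x₁)) (hf.integrable_mul hβ (hk x₂)) (f x₁) (f x₂) hB]
  refine norm_add₃_le.trans ?_
  rw [norm_mul]
  gcongr
  · refine (norm_sub_le _ _).trans ?_
    rw [norm_mul]
    gcongr
    · exact norm_sub_le _ _
    · exact dist_comm x₂ x₁ ▸ hf.norm_sub_le x₂ x₁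
  · exact hf.norm_le x₁

/-- The `T1` theorem for `Λ_β`. For truncated kernels the bound on balls follows from the others. -/
theorem HasGrowth.exists_holderBound_integralOp [IsFiniteMeasure μ] (hμ : HasGrowth μ n A)
    (hA : 0 ≤ A) (hn : 0 ≤ n) (hβ : 0 < β) (hβγ : β < γ) (C₁ C₂ C' C₄ : ℝ≥0) :
    ∃ D : ℝ≥0, ∀ k : X → X → 𝕜, HasSizeBound n C₁ k → HasSmoothnessBound n γ C₂ k →
      (∀ x, Integrable (k x) μ) → HolderBound β C' (fun x ↦ ∫ y, k x y ∂μ) →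
      (∀ x₁ x₂, x₁ ≠ x₂ → ‖∫ y in ball x₁ (2 * dist x₁ x₂), k x₂ y ∂μ‖ ≤ C₄) →
      ∀ (f : X → 𝕜) (M : ℝ), HolderBound β M f →
        HolderBound β (D * M) (integralOp μ k f) := by
  obtain ⟨c₁, hc₁⟩ := hμ.exists_norm_setIntegral_mul_sub_le (𝕜 := 𝕜) hA hn hβ
  obtain ⟨c₂, hc₂⟩ := hμ.exists_norm_setIntegral_compl_sub_mul_sub_le (𝕜 := 𝕜) hA hn hβ hβγ
  set D₁ : ℝ≥0 := c₁ * C₁ + 2 * C₁ * (μ univ).toNNReal + C'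
  set D₂ : ℝ≥0 := c₁ * C₁ * 2 ^ β + c₁ * C₁ * 3 ^ β + C₄ + c₂ * C₂ + C'
  refine ⟨max D₁ D₂, fun k hk₁ hk₂ hk hk1 hkball f M hf ↦ ⟨fun x ↦ ?_, fun x₁ x₂ ↦ ?_⟩⟩
  · have hM : 0 ≤ M := hf.nonneg x
    calc ‖integralOp μ k f x‖
        ≤ c₁ * C₁ * M * 1 ^ β + 2 * C₁ * M * μ.real univ + M * C' := by
          refine (norm_integralOp_le hn hβ hk₁ (hk x) hf).trans ?_
          gcongr
          · exact hc₁ k C₁ hk₁ f M hf x 1 _ one_pos measurableSet_ball subset_rfl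
          · exact hk1.norm_le x
      _ = D₁ * M := by
          rw [Real.one_rpow, Measure.real, ← ENNReal.coe_toNNReal_eq_toReal]
          simp only [D₁, NNReal.coe_add, NNReal.coe_mul, NNReal.coe_ofNat]
          ring
      _ ≤ ↑(max D₁ D₂) * M := by gcongr; exact le_max_left _ _
  · have hM : 0 ≤ M := hf.nonneg x₁
    rcases eq_or_ne x₁ x₂ with rfl | hne
    · rw [sub_self, norm_zero]
      positivity
    set δ := dist x₁ x₂
    have hδ : 0 < δ := dist_pos.2 hne
    have hball : ball x₁ (2 * δ) ⊆ ball x₂ (3 * δ) := ball_subset_ball' (by linarith)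
    calc ‖integralOp μ k f x₁ - integralOp μ k f x₂‖
        ≤ c₁ * C₁ * M * (2 * δ) ^ β + c₁ * C₁ * M * (3 * δ) ^ β + M * δ ^ β * C₄
          + c₂ * C₂ * M * δ ^ β + M * (C' * δ ^ β) := by
          refine (norm_integralOp_sub_le hβ hk hf x₁ x₂
            (measurableSet_ball (x := x₁) (ε := 2 * δ))).trans ?_
          gcongr
          · exact hc₁ k C₁ hk₁ f M hf x₁ _ _ (by positivity) measurableSet_ball subset_rfl
          · exact hc₁ k C₁ hk₁ f M hf x₂ _ _ (by positivity) measurableSet_ball hball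
          · exact hkball x₁ x₂ hne
          · exact hc₂ k C₂ hk₂ f M hf x₁ x₂ hne
          · exact hk1.norm_sub_le x₁ x₂
      _ = D₂ * M * δ ^ β := by
          rw [Real.mul_rpow two_pos.le hδ.le, Real.mul_rpow three_pos.le hδ.le]
          simp only [D₂, NNReal.coe_add, NNReal.coe_mul, NNReal.coe_rpow, NNReal.coe_ofNat]
          ring
      _ ≤ ↑(max D₁ D₂) * M * δ ^ β := by gcongr; exact le_max_right _ _

end HolderT1

section Cutoff

/-- A cutoff function for smooth truncations, encoded with an explicit Lipschitz constant `L`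
instead of a derivative. -/
structure IsLipschitzCutoff (L : ℝ≥0) (η : ℝ → ℝ) : Prop where
  lipschitzWith : LipschitzWith L η
  nonneg (s : ℝ) : 0 ≤ η s
  le_one (s : ℝ) : η s ≤ 1
  eq_zero (s : ℝ) : s ≤ 1 / 2 → η s = 0
  eq_one (s : ℝ) : 1 ≤ s → η s = 1

variable {L : ℝ≥0} {η : ℝ → ℝ}

lemma exists_isLipschitzCutoff (hη : ContDiff ℝ 1 η) (h_nonneg : ∀ s, 0 ≤ η s)
    (h_le_one : ∀ s, η s ≤ 1) (h_zero : ∀ s, s ≤ 1 / 2 → η s = 0) (h_one : ∀ s, 1 ≤ s → η s = 1) :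
    ∃ L : ℝ≥0, IsLipschitzCutoff L η := by
  have hsupp : HasCompactSupport (deriv η) := by
    refine .intro (isCompact_Icc (a := 1 / 2) (b := 1)) fun s hs ↦ ?_
    rcases not_and_or.1 hs with hs | hs
    · have hconst : η =ᶠ[𝓝 s] fun _ ↦ 0 := by
        filter_upwards [Iio_mem_nhds (not_le.1 hs)] with t ht using h_zero t (mem_Iio.1 ht).le
      rw [hconst.deriv_eq, deriv_const]
    · have hconst : η =ᶠ[𝓝 s] fun _ ↦ 1 := by
        filter_upwards [Ioi_mem_nhds (not_le.1 hs)] with t ht using h_one t (mem_Ioi.1 ht).le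
      rw [hconst.deriv_eq, deriv_const]
  obtain ⟨L, hL⟩ := (hη.continuous_deriv le_rfl).bounded_above_of_compact_support hsupp
  exact ⟨L.toNNReal, lipschitzWith_of_nnnorm_deriv_le (hη.differentiable one_ne_zero)
    fun s ↦ NNReal.le_toNNReal_of_coe_le (hL s), h_nonneg, h_le_one, h_zero, h_one⟩

lemma IsLipschitzCutoff.abs_sub_le (hη : IsLipschitzCutoff L η) {γ ε s t δ : ℝ} (hγ : γ ≤ 1)
    (hε : 0 < ε) (hs : 0 < s) (hst : |s - t| ≤ δ) (hδs : 2 * δ ≤ s) :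
    |η (s / ε) - η (t / ε)| ≤ 2 * L * (δ / s) ^ γ := by
  have hδ : 0 ≤ δ := (abs_nonneg _).trans hst
  rcases le_total (2 * ε) s with hεs | hεs
  · have ht : ε ≤ t := by linarith [(abs_le.1 hst).2]
    rw [hη.eq_one _ ((one_le_div hε).2 (by linarith)), hη.eq_one _ ((one_le_div hε).2 ht),
      sub_self, abs_zero]
    positivity
  · calc |η (s / ε) - η (t / ε)| ≤ L * |s / ε - t / ε| := hη.lipschitzWith.dist_le_mul _ _
      _ = L * (|s - t| / ε) := by rw [← sub_div, abs_div, abs_of_pos hε]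
      _ ≤ L * (δ / (s / 2)) := by
          gcongr
          linarith
      _ = 2 * L * (δ / s) := by field_simp
      _ ≤ 2 * L * (δ / s) ^ γ := by
          gcongr
          exact Real.self_le_rpow_of_le_one (by positivity)
            ((div_le_one hs).2 (by linarith)) hγ

end Cutoff

section Truncation

variable {X 𝕜 : Type*} [RCLike 𝕜] [MetricSpace X] {n A γ β ε : ℝ} {L C₁ C₂ C' : ℝ≥0}
  {η : ℝ → ℝ} {K : X → X → 𝕜}

/-- The kernel of the smooth truncation `T_ε` of the singular integral with kernel `K`. -/
noncomputable def truncatedKernel (η : ℝ → ℝ) (K : X → X → 𝕜) (ε : ℝ) (x y : X) : 𝕜 :=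
  ((η (dist x y / ε) : ℝ) : 𝕜) * K x y

lemma adjointKernel_truncatedKernel :
    adjointKernel (truncatedKernel η K ε) = truncatedKernel η (adjointKernel K) ε := by
  ext x y
  simp only [adjointKernel, truncatedKernel, map_mul, RCLike.conj_ofReal, dist_comm]

lemma IsLipschitzCutoff.stronglyMeasurable_truncatedKernel [MeasurableSpace X]
    [OpensMeasurableSpace X] [SecondCountableTopology X] (hη : IsLipschitzCutoff L η)
    (hK : StronglyMeasurable (uncurry K)) (ε : ℝ) :
    StronglyMeasurable (uncurry (truncatedKernel η K ε)) := by
  have hcut : Measurable fun p : X × X ↦ ((η (dist p.1 p.2 / ε) : ℝ) : 𝕜) :=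
    RCLike.measurable_ofReal.comp <| hη.lipschitzWith.continuous.measurable.comp <|
      (measurable_fst.dist measurable_snd).div_const ε
  exact hcut.stronglyMeasurable.mul hK

lemma IsLipschitzCutoff.norm_truncatedKernel_le (hη : IsLipschitzCutoff L η) (x y : X) :
    ‖truncatedKernel η K ε x y‖ ≤ ‖K x y‖ := by
  rw [truncatedKernel, norm_mul, RCLike.norm_ofReal, abs_of_nonneg (hη.nonneg _)]
  exact mul_le_of_le_one_left (norm_nonneg _) (hη.le_one _)

protected lemma HasSizeBound.truncatedKernel (hK : HasSizeBound n C₁ K)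
    (hη : IsLipschitzCutoff L η) : HasSizeBound n C₁ (truncatedKernel η K ε) :=
  fun x y hxy ↦ (hη.norm_truncatedKernel_le x y).trans (hK x y hxy)

lemma HasSizeBound.norm_truncatedKernel_le (hK : HasSizeBound n C₁ K)
    (hη : IsLipschitzCutoff L η) (hn : 0 ≤ n) (hε : 0 < ε) (x y : X) :
    ‖truncatedKernel η K ε x y‖ ≤ C₁ / (ε / 2) ^ n := by
  rcases le_or_gt (dist x y) (ε / 2) with hxy | hxy
  · rw [truncatedKernel, hη.eq_zero _ ((div_le_iff₀ hε).2 (by linarith)),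
      RCLike.ofReal_zero, zero_mul, norm_zero]
    positivity
  · refine (hK.truncatedKernel hη x y (dist_pos.1 (by linarith))).trans ?_
    gcongr

protected lemma HasSmoothnessBound.truncatedKernel (hK : HasSmoothnessBound n γ C₂ K)
    (hK₁ : HasSizeBound n C₁ K) (hη : IsLipschitzCutoff L η) (hn : 0 ≤ n) (hγ : γ ≤ 1)
    (hε : 0 < ε) :
    HasSmoothnessBound n γ (C₂ + 2 * L * C₁ * 2 ^ n) (truncatedKernel η K ε) := by
  intro x₁ x₂ y hy hxy
  set δ := dist x₁ x₂
  set d := dist x₁ y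
  have hd : 0 < d := dist_pos.2 hy
  have hδ : 0 ≤ δ := dist_nonneg
  have hdist : |d - dist x₂ y| ≤ δ := abs_dist_sub_le x₁ x₂ y
  have hd₂ : d / 2 ≤ dist x₂ y := by linarith [(abs_le.1 hdist).2]
  have hK₂ : ‖K x₂ y‖ ≤ C₁ / (d / 2) ^ n := by
    refine (hK₁ x₂ y (dist_pos.1 (by linarith))).trans ?_
    gcongr
  calc ‖truncatedKernel η K ε x₁ y - truncatedKernel η K ε x₂ y‖
      = ‖((η (d / ε) : ℝ) : 𝕜) * (K x₁ y - K x₂ y)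
          + ((η (d / ε) - η (dist x₂ y / ε) : ℝ) : 𝕜) * K x₂ y‖ := by
        simp only [truncatedKernel, RCLike.ofReal_sub, d]
        ring_nf
    _ ≤ η (d / ε) * ‖K x₁ y - K x₂ y‖ + |η (d / ε) - η (dist x₂ y / ε)| * ‖K x₂ y‖ := by
        refine (norm_add_le _ _).trans_eq ?_
        rw [norm_mul, norm_mul, RCLike.norm_ofReal, RCLike.norm_ofReal,
          abs_of_nonneg (hη.nonneg _)]
    _ ≤ 1 * (C₂ * δ ^ γ / d ^ (n + γ)) + 2 * L * (δ / d) ^ γ * (C₁ / (d / 2) ^ n) := by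
        gcongr
        · exact hη.le_one _
        · exact hK x₁ x₂ y hy hxy
        · exact hη.abs_sub_le hγ hε hd hdist hxy
    _ = (C₂ + 2 * L * C₁ * 2 ^ n) * δ ^ γ / d ^ (n + γ) := by
        rw [Real.div_rpow hδ hd.le, Real.div_rpow hd.le two_pos.le, Real.rpow_add hd]
        field_simp

variable [MeasurableSpace X] [OpensMeasurableSpace X] {μ : Measure X}

lemma HasSizeBound.integrable_truncatedKernel [SecondCountableTopology X] [IsFiniteMeasure μ]
    (hK : HasSizeBound n C₁ K) (hKm : StronglyMeasurable (uncurry K))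
    (hη : IsLipschitzCutoff L η) (hn : 0 ≤ n) (hε : 0 < ε) (x : X) :
    Integrable (truncatedKernel η K ε x) μ :=
  .of_bound (hη.stronglyMeasurable_truncatedKernel hKm ε).of_uncurry_left.aestronglyMeasurable
    _ (.of_forall (hK.norm_truncatedKernel_le hη hn hε x))

lemma HasSizeBound.norm_setIntegral_ball_truncatedKernel_le (hK : HasSizeBound n C₁ K)
    (hμ : HasGrowth μ n A) (hA : 0 ≤ A) (hη : IsLipschitzCutoff L η) (hn : 0 ≤ n) {δ : ℝ}
    (hδ : 0 < δ) (hδε : δ ≤ ε) (x₁ x₂ : X) :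
    ‖∫ y in ball x₁ (2 * δ), truncatedKernel η K ε x₂ y ∂μ‖ ≤
      C₁ * A * 4 ^ n := by
  have hε : 0 < ε := hδ.trans_le hδε
  have hvol : ∫⁻ _ in ball x₁ (2 * δ), ENNReal.ofReal 1 ∂μ ≤
      ENNReal.ofReal (A * (2 * δ) ^ n) := by
    rw [ENNReal.ofReal_one, setLIntegral_one]
    exact hμ x₁ _ (by positivity)
  calc ‖∫ y in ball x₁ (2 * δ), truncatedKernel η K ε x₂ y ∂μ‖
      ≤ C₁ / (ε / 2) ^ n * (A * (2 * δ) ^ n) := by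
        refine norm_setIntegral_le_of_setLIntegral_le measurableSet_ball (by positivity)
          (by positivity) (fun y _ ↦ ?_) hvol
        rw [mul_one]
        exact hK.norm_truncatedKernel_le hη hn hε x₂ y
    _ = C₁ * A * (4 * (δ / ε)) ^ n := by
        have hscale : 4 * (δ / ε) = 2 * δ / (ε / 2) := by ring
        rw [hscale, Real.div_rpow (x := 2 * δ) (by positivity) (by positivity)]
        ring
    _ ≤ C₁ * A * 4 ^ n := by
        gcongr
        exact mul_le_of_le_one_right (by norm_num) ((div_le_one hε).2 hδε)

/-- Outside `B(x₁, 2d(x₁, x₂))` the truncations at scales `ε ≤ d(x₁, x₂)` and `d(x₁, x₂)` agree. -/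
lemma HasSizeBound.norm_setIntegral_ball_two_mul_dist_truncatedKernel_le
    [SecondCountableTopology X] [IsFiniteMeasure μ] (hK : HasSizeBound n C₁ K)
    (hKm : StronglyMeasurable (uncurry K)) (hμ : HasGrowth μ n A) (hA : 0 ≤ A)
    (hη : IsLipschitzCutoff L η) (hn : 0 ≤ n) {x₁ x₂ : X}
    (hT : ∀ ε, 0 < ε → ‖∫ y, truncatedKernel η K ε x₂ y ∂μ‖ ≤ C')
    (hε : 0 < ε) (hne : x₁ ≠ x₂) :
    ‖∫ y in ball x₁ (2 * dist x₁ x₂), truncatedKernel η K ε x₂ y ∂μ‖ ≤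
      2 * C' + C₁ * A * 4 ^ n := by
  set δ := dist x₁ x₂
  set B := ball x₁ (2 * δ)
  set k : ℝ → X → 𝕜 := fun ε ↦ truncatedKernel η K ε x₂
  have hδ : 0 < δ := dist_pos.2 hne
  rcases le_total δ ε with hδε | hεδ
  · have hB : ‖∫ y in B, k ε y ∂μ‖ ≤ C₁ * A * 4 ^ n :=
      hK.norm_setIntegral_ball_truncatedKernel_le hμ hA hη hn hδ hδε x₁ x₂
    linarith [C'.2]
  have hBδ : ‖∫ y in B, k δ y ∂μ‖ ≤ C₁ * A * 4 ^ n :=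
    hK.norm_setIntegral_ball_truncatedKernel_le hμ hA hη hn hδ le_rfl x₁ x₂
  have hagree : ∫ y in Bᶜ, k ε y ∂μ = ∫ y in Bᶜ, k δ y ∂μ := by
    refine setIntegral_congr_fun measurableSet_ball.compl fun y hy ↦ ?_
    rw [mem_compl_iff, mem_ball', not_lt] at hy
    have hδy : δ ≤ dist x₂ y := by linarith [dist_triangle x₁ x₂ y]
    simp only [k, truncatedKernel, hη.eq_one _ ((one_le_div hδ).2 hδy),
      hη.eq_one _ ((one_le_div hε).2 (hεδ.trans hδy))]
  have hsplit : ∀ ε', 0 < ε' → ∫ y, k ε' y ∂μ = ∫ y in B, k ε' y ∂μ + ∫ y in Bᶜ, k ε' y ∂μ :=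
    fun ε' hε' ↦ (integral_add_compl measurableSet_ball
      (hK.integrable_truncatedKernel hKm hη hn hε' x₂)).symm
  have hcomp : ∫ y in B, k ε y ∂μ = ∫ y, k ε y ∂μ - ∫ y, k δ y ∂μ + ∫ y in B, k δ y ∂μ := by
    rw [hsplit ε hε, hsplit δ hδ, hagree]
    ring
  rw [hcomp]
  linarith [norm_add_le (∫ y, k ε y ∂μ - ∫ y, k δ y ∂μ) (∫ y in B, k δ y ∂μ),
    norm_sub_le (∫ y, k ε y ∂μ) (∫ y, k δ y ∂μ), hT ε hε, hT δ hδ]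

theorem HasGrowth.exists_holderBound_integralOp_truncatedKernel [SecondCountableTopology X]
    [IsFiniteMeasure μ] (hμ : HasGrowth μ n A) (hA : 0 ≤ A) (hn : 0 ≤ n) (hβ : 0 < β)
    (hβγ : β < γ) (hγ : γ ≤ 1) {C₁ C₂ C' : ℝ} (hKm : StronglyMeasurable (uncurry K))
    (hK₁ : HasSizeBound n C₁ K) (hK₂ : HasSmoothnessBound n γ C₂ K) (hη : IsLipschitzCutoff L η)
    (hT : ∀ ε, 0 < ε → HolderBound β C' fun x ↦ ∫ y, truncatedKernel η K ε x y ∂μ) :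
    ∃ D : ℝ≥0, ∀ ε, 0 < ε → ∀ (f : X → 𝕜) (M : ℝ), HolderBound β M f →
      HolderBound β (D * M) (integralOp μ (truncatedKernel η K ε) f) := by
  replace hK₁ := hK₁.mono (Real.le_coe_toNNReal C₁)
  replace hK₂ := hK₂.mono (Real.le_coe_toNNReal C₂)
  replace hT := fun ε hε ↦ (hT ε hε).mono (Real.le_coe_toNNReal C')
  lift A to ℝ≥0 using hA
  obtain ⟨D, hD⟩ := hμ.exists_holderBound_integralOp (𝕜 := 𝕜) A.2 hn hβ hβγ C₁.toNNReal
    (C₂.toNNReal + 2 * L * C₁.toNNReal * 2 ^ n) C'.toNNReal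
    (2 * C'.toNNReal + C₁.toNNReal * A * 4 ^ n)
  refine ⟨D, fun ε hε ↦ hD _ (hK₁.truncatedKernel hη) ?_
    (hK₁.integrable_truncatedKernel hKm hη hn hε) (hT ε hε) fun x₁ x₂ hne ↦ ?_⟩
  · exact_mod_cast hK₂.truncatedKernel hK₁ hη hn hγ hε
  · exact_mod_cast hK₁.norm_setIntegral_ball_two_mul_dist_truncatedKernel_le hKm hμ A.2 hη hn
      (fun ε' hε' ↦ (hT ε' hε').norm_le x₂) hε hne

end Truncation

section Krein

lemma le_mul_of_sq_le_mul_of_le_geometric {a : ℕ → ℝ} {c D : ℝ} (ha : ∀ m, 0 ≤ a m) (hD : 0 ≤ D)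
    (hlog : ∀ m, a (m + 1) ^ 2 ≤ a m * a (m + 2)) (hbound : ∀ m, a m ≤ c * D ^ m) :
    a 1 ≤ D * a 0 := by
  rcases (ha 0).eq_or_lt with h0 | h0
  · have h1 : a 1 ^ 2 ≤ 0 := (hlog 0).trans_eq (by rw [← h0, zero_mul])
    rw [pow_eq_zero_iff two_ne_zero |>.1 (h1.antisymm (sq_nonneg _)), ← h0, mul_zero]
  by_contra! hlt
  set q := a 1 / a 0
  have hDq : D < q := (lt_div_iff₀ h0).2 hlt
  have hq : 0 < q := hD.trans_lt hDq
  have hratio : ∀ m, 0 < a m ∧ q * a m ≤ a (m + 1) := by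
    intro m
    induction m with
    | zero => exact ⟨h0, (div_mul_cancel₀ _ h0.ne').le⟩
    | succ m ih =>
      obtain ⟨hm, hqm⟩ := ih
      have hm' : 0 < a (m + 1) := (mul_pos hq hm).trans_le hqm
      refine ⟨hm', le_of_mul_le_mul_left ?_ hm⟩
      calc a m * (q * a (m + 1)) = q * a m * a (m + 1) := by ring
        _ ≤ a (m + 1) * a (m + 1) := by gcongr
        _ ≤ a m * a (m + 2) := by rw [← sq]; exact hlog m
  have hgrowth : ∀ m, q ^ m * a 0 ≤ a m := fun m ↦ by
    simpa using geom_le (u := a) hq.le m fun k _ ↦ (hratio k).2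
  have hdecay : ∀ m, a 0 ≤ c * (D / q) ^ m := fun m ↦ by
    rw [div_pow, ← mul_div_assoc, le_div_iff₀' (by positivity)]
    exact (hgrowth m).trans (hbound m)
  have hlim : Tendsto (fun m : ℕ ↦ c * (D / q) ^ m) atTop (𝓝 (c * 0)) :=
    (tendsto_pow_atTop_nhds_zero_of_lt_one (by positivity) ((div_lt_one hq).2 hDq)).const_mul c
  linarith [ge_of_tendsto' hlim hdecay]

variable {𝕜 H : Type*} [RCLike 𝕜] [NormedAddCommGroup H] [InnerProductSpace 𝕜 H] [CompleteSpace H]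

lemma norm_apply_le_of_norm_pow_apply_le {S : H →L[𝕜] H} (hS : IsSelfAdjoint S) {x : H} {c D : ℝ}
    (hD : 0 ≤ D) (hbound : ∀ m : ℕ, ‖(S ^ m) x‖ ≤ c * D ^ m) : ‖S x‖ ≤ D * ‖x‖ := by
  have hlog : ∀ m : ℕ, ‖(S ^ (m + 1)) x‖ ^ 2 ≤ ‖(S ^ m) x‖ * ‖(S ^ (m + 2)) x‖ := fun m ↦ by
    have hinner : inner 𝕜 ((S ^ (m + 1)) x) ((S ^ (m + 1)) x) =
        inner 𝕜 ((S ^ m) x) ((S ^ (m + 2)) x) := by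
      rw [pow_succ' S (m + 1), pow_succ' S m]
      exact ContinuousLinearMap.isSelfAdjoint_iff_isSymmetric.1 hS _ _
    rw [← inner_self_eq_norm_sq (𝕜 := 𝕜), hinner]
    exact re_inner_le_norm _ _
  simpa using le_mul_of_sq_le_mul_of_le_geometric (fun m ↦ norm_nonneg ((S ^ m) x)) hD hlog hbound

/-- **Krein's theorem**. The sets `U M` are the balls of a normed space embedded in `H`. -/
theorem opNorm_le_sqrt_of_mapsTo {T : H →L[𝕜] H} {U : ℝ≥0 → Set H} {a b c : ℝ≥0}
    (hT : ∀ M, MapsTo T (U M) (U (a * M)))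
    (hT' : ∀ M, MapsTo (ContinuousLinearMap.adjoint T) (U M) (U (b * M)))
    (hU : ∀ M, ∀ x ∈ U M, ‖x‖ ≤ c * M) (hdense : Dense (⋃ M, U M)) : ‖T‖ ≤ √(a * b) := by
  set S := ContinuousLinearMap.adjoint T ∘L T
  have hiter : ∀ M, ∀ x ∈ U M, ∀ m : ℕ, (S ^ m) x ∈ U (M * (a * b) ^ m) := by
    intro M x hx m
    induction m with
    | zero => simpa using hx
    | succ m ih =>
      have hM : M * (a * b) ^ (m + 1) = b * (a * (M * (a * b) ^ m)) := by ring
      rw [pow_succ' S, hM]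
      exact hT' _ (hT _ ih)
  have hS : ∀ x, ‖S x‖ ≤ a * b * ‖x‖ := by
    refine hdense.induction (fun x hx ↦ ?_)
      (isClosed_le S.continuous.norm (continuous_const.mul continuous_norm))
    obtain ⟨M, hx⟩ := mem_iUnion.1 hx
    have hself : IsSelfAdjoint S := IsSelfAdjoint.star_mul_self T
    refine norm_apply_le_of_norm_pow_apply_le hself (c := c * M) (by positivity) fun m ↦ ?_
    simpa [mul_assoc] using hU _ _ (hiter M x hx m)
  refine Real.le_sqrt_of_sq_le ?_
  rw [sq, ← ContinuousLinearMap.norm_adjoint_comp_self]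
  exact ContinuousLinearMap.opNorm_le_bound _ (by positivity) hS

end Krein

section Lp

variable {X 𝕜 : Type*} [RCLike 𝕜] [MeasurableSpace X] {μ : Measure X} {k : X → X → 𝕜} {B : ℝ}
  {f g : X → 𝕜} {p : ℝ≥0∞}

lemma integralOp_congr_ae (h : f =ᵐ[μ] g) : integralOp μ k f = integralOp μ k g :=
  funext fun _ ↦ integral_congr_ae <| h.mono fun y hy ↦ by simp only [hy]

lemma norm_integralOp_le_mul_integral_norm (hB : ∀ x y, ‖k x y‖ ≤ B) (hf : Integrable f μ) (x : X) :
    ‖integralOp μ k f x‖ ≤ B * ∫ y, ‖f y‖ ∂μ := by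
  rw [← integral_const_mul]
  refine norm_integral_le_of_norm_le (hf.norm.const_mul B) (.of_forall fun y ↦ ?_)
  rw [norm_mul]
  gcongr
  exact hB x y

lemma stronglyMeasurable_integralOp [SFinite μ] (hk : StronglyMeasurable (uncurry k))
    (hf : AEStronglyMeasurable f μ) : StronglyMeasurable (integralOp μ k f) := by
  rw [integralOp_congr_ae hf.ae_eq_mk]
  exact (hk.mul (hf.stronglyMeasurable_mk.comp_measurable measurable_snd)).integral_prod_right

lemma integrable_kernel_mul (hk : StronglyMeasurable (uncurry k)) (hB : ∀ x y, ‖k x y‖ ≤ B)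
    (hf : Integrable f μ) (x : X) : Integrable (fun y ↦ k x y * f y) μ :=
  hf.bdd_mul hk.of_uncurry_left.aestronglyMeasurable (.of_forall (hB x))

lemma integralOp_add (hk : StronglyMeasurable (uncurry k)) (hB : ∀ x y, ‖k x y‖ ≤ B)
    (hf : Integrable f μ) (hg : Integrable g μ) :
    integralOp μ k (f + g) = integralOp μ k f + integralOp μ k g := by
  ext x
  simp only [integralOp, Pi.add_apply, mul_add]
  exact integral_add (integrable_kernel_mul hk hB hf x) (integrable_kernel_mul hk hB hg x)

lemma integralOp_const_smul (c : 𝕜) (f : X → 𝕜) :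
    integralOp μ k (c • f) = c • integralOp μ k f := by
  ext x
  simp only [integralOp, Pi.smul_apply, smul_eq_mul, mul_left_comm _ c, integral_const_mul]

variable [IsFiniteMeasure μ]

lemma memLp_integralOp (hk : StronglyMeasurable (uncurry k)) (hB : ∀ x y, ‖k x y‖ ≤ B)
    (hf : Integrable f μ) : MemLp (integralOp μ k f) p μ :=
  .of_bound (stronglyMeasurable_integralOp hk hf.1).aestronglyMeasurable _
    (.of_forall (norm_integralOp_le_mul_integral_norm hB hf))

variable [hp : Fact (1 ≤ p)]

lemma integrable_coeFn_Lp (F : Lp 𝕜 p μ) : Integrable F μ := (Lp.memLp F).integrable hp.out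

lemma integral_norm_le_mul_norm_Lp (F : Lp 𝕜 p μ) :
    ∫ y, ‖F y‖ ∂μ ≤ μ.real univ ^ (1 - 1 / p.toReal) * ‖F‖ := by
  have hexp : 0 ≤ 1 / (1 : ℝ≥0∞).toReal - 1 / p.toReal := by
    rcases eq_or_ne p ⊤ with rfl | hp'
    · simp
    · have : 1 ≤ p.toReal := by simpa using ENNReal.toReal_mono hp' hp.out
      simpa using inv_le_one_of_one_le₀ this
  have hle := ENNReal.toReal_mono (ENNReal.mul_ne_top (Lp.eLpNorm_ne_top F)
    (ENNReal.rpow_ne_top_of_nonneg hexp (measure_ne_top μ univ)))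
    (eLpNorm_le_eLpNorm_mul_rpow_measure_univ hp.out (Lp.aestronglyMeasurable F))
  rwa [ENNReal.toReal_mul, ← ENNReal.toReal_rpow, mul_comm, ENNReal.toReal_one, one_div_one,
    eLpNorm_one_eq_lintegral_enorm,
    ← integral_norm_eq_lintegral_enorm (Lp.aestronglyMeasurable F), ← Lp.norm_def] at hle

lemma exists_norm_toLp_integralOp_le (hk : StronglyMeasurable (uncurry k))
    (hB : ∀ x y, ‖k x y‖ ≤ B) :
    ∃ C, ∀ F : Lp 𝕜 p μ,
      ‖(memLp_integralOp (p := p) hk hB (integrable_coeFn_Lp F)).toLp‖ ≤ C * ‖F‖ := by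
  set a := μ.real univ ^ (1 - 1 / p.toReal)
  refine ⟨measureUnivNNReal μ ^ p.toReal⁻¹ * (|B| * a), fun F ↦ ?_⟩
  have hbound : ∀ x, ‖integralOp μ k F x‖ ≤ |B| * (a * ‖F‖) := fun x ↦
    calc ‖integralOp μ k F x‖ ≤ B * ∫ y, ‖F y‖ ∂μ :=
          norm_integralOp_le_mul_integral_norm hB (integrable_coeFn_Lp F) x
      _ ≤ |B| * (a * ‖F‖) := by
          gcongr
          exacts [le_abs_self B, integral_norm_le_mul_norm_Lp F]
  rw [mul_assoc, mul_assoc]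
  refine Lp.norm_le_of_ae_bound (by positivity) ?_
  filter_upwards [MemLp.coeFn_toLp (memLp_integralOp (p := p) hk hB (integrable_coeFn_Lp F))]
    with x hx
  rw [hx]
  exact hbound x

/-- The integral operator with a bounded kernel `k`, as a bounded operator on `Lᵖ(μ)`. -/
noncomputable def integralOpCLM (p : ℝ≥0∞) [Fact (1 ≤ p)] (hk : StronglyMeasurable (uncurry k))
    (hB : ∀ x y, ‖k x y‖ ≤ B) : Lp 𝕜 p μ →L[𝕜] Lp 𝕜 p μ :=
  LinearMap.mkContinuousOfExistsBound
    { toFun F := (memLp_integralOp hk hB (integrable_coeFn_Lp F)).toLp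
      map_add' F G := by
        rw [← MemLp.toLp_add]
        refine MemLp.toLp_congr _ _ (.of_eq ?_)
        rw [integralOp_congr_ae (Lp.coeFn_add F G),
          integralOp_add hk hB (integrable_coeFn_Lp F) (integrable_coeFn_Lp G)]
      map_smul' c F := by
        rw [RingHom.id_apply, ← MemLp.toLp_const_smul]
        refine MemLp.toLp_congr _ _ (.of_eq ?_)
        rw [integralOp_congr_ae (Lp.coeFn_smul c F), integralOp_const_smul] }
    (exists_norm_toLp_integralOp_le hk hB)

lemma integralOpCLM_ae_eq (hk : StronglyMeasurable (uncurry k)) (hB : ∀ x y, ‖k x y‖ ≤ B)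
    {F : Lp 𝕜 p μ} (hF : F =ᵐ[μ] f) : integralOpCLM p hk hB F =ᵐ[μ] integralOp μ k f := by
  rw [← integralOp_congr_ae hF]
  exact MemLp.coeFn_toLp (memLp_integralOp hk hB (integrable_coeFn_Lp F))

lemma eLpNorm_integralOp_le (hk : StronglyMeasurable (uncurry k)) (hB : ∀ x y, ‖k x y‖ ≤ B)
    (hf : MemLp f p μ) :
    eLpNorm (integralOp μ k f) p μ ≤
      ENNReal.ofReal ‖integralOpCLM (μ := μ) p hk hB‖ * eLpNorm f p μ := by
  have hT := integralOpCLM_ae_eq hk hB hf.coeFn_toLp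
  rw [← eLpNorm_congr_ae hT, ← eLpNorm_congr_ae hf.coeFn_toLp, ← Lp.enorm_def, ← Lp.enorm_def,
    ofReal_norm]
  exact ContinuousLinearMap.le_opENorm _ _

lemma adjoint_integralOpCLM (hk : StronglyMeasurable (uncurry k)) (hB : ∀ x y, ‖k x y‖ ≤ B) :
    ContinuousLinearMap.adjoint (integralOpCLM (μ := μ) 2 hk hB) =
      integralOpCLM 2 (stronglyMeasurable_adjointKernel hk) (norm_adjointKernel_le hB) := by
  have hk' := stronglyMeasurable_adjointKernel hk
  have hB' := norm_adjointKernel_le hB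
  refine (ContinuousLinearMap.eq_adjoint_iff _ _).2 (fun F G ↦ ?_) |>.symm
  have hint : Integrable (fun z : X × X ↦ k z.2 z.1 * (G z.1 * conj (F z.2))) (μ.prod μ) :=
    ((integrable_coeFn_Lp G).mul_prod <| (Lp.memLp F).star.integrable one_le_two).bdd_mul
      (hk.comp_measurable measurable_swap).aestronglyMeasurable (.of_forall fun z ↦ hB z.2 z.1)
  calc inner 𝕜 (integralOpCLM 2 hk' hB' F) G
      = ∫ x, ∫ y, k y x * (G x * conj (F y)) ∂μ ∂μ := by
        rw [L2.inner_def]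
        refine integral_congr_ae ?_
        filter_upwards [integralOpCLM_ae_eq hk' hB' (EventuallyEq.refl _ F)] with x hx
        rw [hx, RCLike.inner_apply, integralOp, ← integral_conj, ← integral_const_mul]
        simp only [adjointKernel, map_mul, RCLike.conj_conj, mul_left_comm]
    _ = ∫ y, ∫ x, k y x * (G x * conj (F y)) ∂μ ∂μ := integral_integral_swap hint
    _ = inner 𝕜 F (integralOpCLM 2 hk hB G) := by
        rw [L2.inner_def]
        refine integral_congr_ae ?_
        filter_upwards [integralOpCLM_ae_eq hk hB (EventuallyEq.refl _ G)] with y hy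
        rw [hy, RCLike.inner_apply, integralOp, ← integral_mul_const]
        simp only [mul_assoc]

end Lp

section HolderBall

variable {X 𝕜 : Type*} [RCLike 𝕜] [PseudoMetricSpace X] [MeasurableSpace X] {μ : Measure X}
  {p : ℝ≥0∞} {β : ℝ} {M : ℝ≥0}

/-- The classes in `Lᵖ(μ)` of the functions `f` with `‖f‖_{Λ_β} ≤ M`. -/
def holderBall (𝕜 : Type*) [RCLike 𝕜] (p : ℝ≥0∞) (μ : Measure X) (β : ℝ) (M : ℝ≥0) :
    Set (Lp 𝕜 p μ) :=
  {F | ∃ f : X → 𝕜, HolderBound β M f ∧ F =ᵐ[μ] f}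

variable [IsFiniteMeasure μ]

lemma norm_le_of_mem_holderBall {F : Lp 𝕜 p μ} (hF : F ∈ holderBall 𝕜 p μ β M) :
    ‖F‖ ≤ ↑(measureUnivNNReal μ ^ p.toReal⁻¹) * M := by
  obtain ⟨f, hf, hFf⟩ := hF
  exact Lp.norm_le_of_ae_bound M.2 <| hFf.mono fun x hx ↦ by rw [hx]; exact hf.norm_le x

lemma mapsTo_integralOpCLM_holderBall [Fact (1 ≤ p)] {k : X → X → 𝕜} {B : ℝ} {D : ℝ≥0}
    (hk : StronglyMeasurable (uncurry k)) (hB : ∀ x y, ‖k x y‖ ≤ B)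
    (hD : ∀ (f : X → 𝕜) (M : ℝ), HolderBound β M f → HolderBound β (D * M) (integralOp μ k f)) :
    MapsTo (integralOpCLM p hk hB) (holderBall 𝕜 p μ β M) (holderBall 𝕜 p μ β (D * M)) := by
  rintro F ⟨f, hf, hFf⟩
  exact ⟨integralOp μ k f, by exact_mod_cast hD f M hf, integralOpCLM_ae_eq hk hB hFf⟩

theorem norm_integralOpCLM_le_sqrt {k : X → X → 𝕜} {B : ℝ} {a b : ℝ≥0}
    (hk : StronglyMeasurable (uncurry k)) (hB : ∀ x y, ‖k x y‖ ≤ B)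
    (ha : ∀ (f : X → 𝕜) (M : ℝ), HolderBound β M f → HolderBound β (a * M) (integralOp μ k f))
    (hb : ∀ (f : X → 𝕜) (M : ℝ), HolderBound β M f →
      HolderBound β (b * M) (integralOp μ (adjointKernel k) f))
    (hdense : Dense (⋃ M, holderBall 𝕜 2 μ β M)) :
    ‖integralOpCLM (μ := μ) 2 hk hB‖ ≤ √(a * b) := by
  refine opNorm_le_sqrt_of_mapsTo (U := holderBall 𝕜 2 μ β)
    (fun M ↦ mapsTo_integralOpCLM_holderBall hk hB ha) (fun M ↦ ?_)
    (fun M F hF ↦ norm_le_of_mem_holderBall hF) hdense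
  rw [adjoint_integralOpCLM]
  exact mapsTo_integralOpCLM_holderBall _ _ hb

end HolderBall

end SingularIntegral

open SingularIntegral in
theorem singular_integral_L2_bounded_general {X 𝕜 : Type*} [RCLike 𝕜] [MetricSpace X]
    [MeasurableSpace X] [OpensMeasurableSpace X] [SecondCountableTopology X] {μ : Measure X}
    [IsFiniteMeasure μ] {n A γ β : ℝ} (hn : 0 ≤ n) (hA : 0 ≤ A) (hγ : γ ≤ 1) (hβ : 0 < β)
    (hβγ : β < γ) (hμ : HasGrowth μ n A) {K : X → X → 𝕜} {C₁ C₂ C' C'' : ℝ}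
    (hKm : StronglyMeasurable (Function.uncurry K)) (hK₁ : HasSizeBound n C₁ K)
    (hK₂ : HasSmoothnessBound n γ C₂ K) (hK₂' : HasSmoothnessBound n γ C₂ (adjointKernel K))
    {L : NNReal} {η : ℝ → ℝ} (hη : IsLipschitzCutoff L η)
    (hdense : Dense (⋃ M, holderBall 𝕜 2 μ β M))
    (hT : ∀ ε, 0 < ε → HolderBound β C' fun x ↦ ∫ y, truncatedKernel η K ε x y ∂μ)
    (hT' : ∀ ε, 0 < ε →
      HolderBound β C'' fun x ↦ ∫ y, truncatedKernel η (adjointKernel K) ε x y ∂μ) :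
    ∃ C > 0, ∀ ε, 0 < ε →
      (∀ f, MemLp f 2 μ → eLpNorm (integralOp μ (truncatedKernel η K ε) f) 2 μ ≤
        ENNReal.ofReal C * eLpNorm f 2 μ) ∧
      ∃ T : Lp 𝕜 2 μ →L[𝕜] Lp 𝕜 2 μ, ‖T‖ ≤ C ∧ ∀ (F : Lp 𝕜 2 μ) (f : X → 𝕜), F =ᵐ[μ] f →
        T F =ᵐ[μ] integralOp μ (truncatedKernel η K ε) f := by
  obtain ⟨a, ha⟩ :=
    hμ.exists_holderBound_integralOp_truncatedKernel hA hn hβ hβγ hγ hKm hK₁ hK₂ hη hT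
  obtain ⟨b, hb⟩ := hμ.exists_holderBound_integralOp_truncatedKernel hA hn hβ hβγ hγ
    (stronglyMeasurable_adjointKernel hKm) hK₁.adjointKernel hK₂' hη hT'
  refine ⟨√(a * b) + 1, by positivity, fun ε hε ↦ ?_⟩
  have hk := hη.stronglyMeasurable_truncatedKernel hKm ε
  have hB := (hK₁.mono (Real.le_coe_toNNReal C₁)).norm_truncatedKernel_le hη hn hε
  have hnorm : ‖integralOpCLM (μ := μ) 2 hk hB‖ ≤ √(a * b) + 1 :=
    (norm_integralOpCLM_le_sqrt hk hB (ha ε hε)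
      (by rw [adjointKernel_truncatedKernel]; exact hb ε hε) hdense).trans (by linarith)
  refine ⟨fun f hf ↦ (eLpNorm_integralOp_le hk hB hf).trans ?_,
    integralOpCLM 2 hk hB, hnorm, fun F f hF ↦ integralOpCLM_ae_eq hk hB hF⟩
  gcongr

/-- Application 1: on a separable finite measure metric space with n-dimensional growth,
if `Λ_β` is dense in `L²(μ)`, `K` is a standard singular integral kernel whose adjoint
kernel `K*(x,y) = conj (K y x)` also satisfies (S2), and the smooth truncations satisfy
`‖T_ε 1‖_{Λ_β} ≤ C'` and `‖T*_ε 1‖_{Λ_β} ≤ C''` for all `ε > 0`, then the `T_ε` are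
uniformly bounded on `L²(μ)` and extend to bounded operators on `L²(μ)`. -/
theorem singular_integral_L2_bounded {X : Type*} [MetricSpace X] [MeasurableSpace X]
    [BorelSpace X] [SecondCountableTopology X]
    (μ : Measure X) (n A γ β : ℝ) (hn : 0 < n) (hA : 0 < A)
    (hγ : 0 < γ) (hγ1 : γ ≤ 1) (hβ : 0 < β) (hβn : β < n) (hβγ : β < γ)
    (growth : ∀ (x : X) (r : ℝ), 0 < r → μ (ball x r) ≤ ENNReal.ofReal (A * r ^ n))
    (hfin : μ Set.univ < ⊤)
    (K : X → X → ℂ) (hKm : Measurable (Function.uncurry K)) (C₁ C₂ : ℝ)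
    (hS1 : ∀ x y : X, x ≠ y → ‖K x y‖ ≤ C₁ / dist x y ^ n)
    (hS2 : ∀ x₁ x₂ y : X, x₁ ≠ y → 2 * dist x₁ x₂ ≤ dist x₁ y →
      ‖K x₁ y - K x₂ y‖ ≤ C₂ * dist x₁ x₂ ^ γ / dist x₁ y ^ (n + γ))
    (hS2star : ∀ x₁ x₂ y : X, x₁ ≠ y → 2 * dist x₁ x₂ ≤ dist x₁ y →
      ‖(starRingEnd ℂ) (K y x₁) - (starRingEnd ℂ) (K y x₂)‖
        ≤ C₂ * dist x₁ x₂ ^ γ / dist x₁ y ^ (n + γ))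
    (η : ℝ → ℝ) (hη : ContDiff ℝ 1 η) (hη0 : ∀ s, 0 ≤ η s) (hη1 : ∀ s, η s ≤ 1)
    (hηlo : ∀ s : ℝ, s ≤ 1 / 2 → η s = 0) (hηhi : ∀ s : ℝ, 1 ≤ s → η s = 1)
    (hdense : Dense {F : Lp ℂ 2 μ | ∃ f : X → ℂ,
      (∃ M L : ℝ, (∀ x, ‖f x‖ ≤ M) ∧ ∀ x y : X, ‖f x - f y‖ ≤ L * dist x y ^ β) ∧
      ∀ᵐ x ∂μ, F x = f x})
    (C' C'' : ℝ)
    (hT1 : ∀ ε : ℝ, 0 < ε →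
      (∀ x : X, ‖∫ y, (η (dist x y / ε) : ℂ) * K x y ∂μ‖ ≤ C') ∧
      (∀ x₁ x₂ : X,
        ‖(∫ y, (η (dist x₁ y / ε) : ℂ) * K x₁ y ∂μ) -
            ∫ y, (η (dist x₂ y / ε) : ℂ) * K x₂ y ∂μ‖ ≤ C' * dist x₁ x₂ ^ β))
    (hT1star : ∀ ε : ℝ, 0 < ε →
      (∀ x : X, ‖∫ y, (η (dist x y / ε) : ℂ) * (starRingEnd ℂ) (K y x) ∂μ‖ ≤ C'') ∧
      (∀ x₁ x₂ : X,
        ‖(∫ y, (η (dist x₁ y / ε) : ℂ) * (starRingEnd ℂ) (K y x₁) ∂μ) -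
            ∫ y, (η (dist x₂ y / ε) : ℂ) * (starRingEnd ℂ) (K y x₂) ∂μ‖
          ≤ C'' * dist x₁ x₂ ^ β)) :
    ∃ C > 0, ∀ ε : ℝ, 0 < ε →
      (∀ f : X → ℂ, Measurable f →
        (∃ M L : ℝ, (∀ x, ‖f x‖ ≤ M) ∧ ∀ x y : X, ‖f x - f y‖ ≤ L * dist x y ^ β) →
        eLpNorm (fun x => ∫ y, (η (dist x y / ε) : ℂ) * K x y * f y ∂μ) 2 μ
          ≤ ENNReal.ofReal C * eLpNorm f 2 μ) ∧
      ∃ T : Lp ℂ 2 μ →L[ℂ] Lp ℂ 2 μ, ‖T‖ ≤ C ∧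
        ∀ (F : Lp ℂ 2 μ) (f : X → ℂ), Measurable f →
          (∃ M L : ℝ, (∀ x, ‖f x‖ ≤ M) ∧ ∀ x y : X, ‖f x - f y‖ ≤ L * dist x y ^ β) →
          (∀ᵐ x ∂μ, F x = f x) →
          ∀ᵐ x ∂μ, (T F) x = ∫ y, (η (dist x y / ε) : ℂ) * K x y * f y ∂μ := by
  have : IsFiniteMeasure μ := ⟨hfin⟩
  obtain ⟨L, hL⟩ := SingularIntegral.exists_isLipschitzCutoff hη hη0 hη1 hηlo hηhi
  have hdense' : Dense (⋃ M, SingularIntegral.holderBall ℂ 2 μ β M) := by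
    refine hdense.mono ?_
    rintro F ⟨f, ⟨M, L, hM, hL⟩, hF⟩
    obtain ⟨M', hf⟩ := SingularIntegral.exists_holderBound hM hL
    exact Set.mem_iUnion.2 ⟨M'.toNNReal, f, hf.mono (Real.le_coe_toNNReal M'), hF⟩
  obtain ⟨C, hC, hT⟩ := singular_integral_L2_bounded_general hn.le hA.le hγ1 hβ hβγ growth
    hKm.stronglyMeasurable hS1 hS2 hS2star hL hdense' (fun ε hε ↦ ⟨(hT1 ε hε).1, (hT1 ε hε).2⟩)
    fun ε hε ↦ ⟨(hT1star ε hε).1, (hT1star ε hε).2⟩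
  refine ⟨C, hC, fun ε hε ↦ ⟨fun f hf ⟨M, _, hM, _⟩ ↦ ?_, ?_⟩⟩
  · exact (hT ε hε).1 f (.of_bound hf.aestronglyMeasurable M (.of_forall hM))
  · obtain ⟨T, hTC, hTF⟩ := (hT ε hε).2
    exact ⟨T, hTC, fun F f _ _ hF ↦ hTF F f hF⟩
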